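/- Suppose there exist a symmetric positive definite n×n matrix Y and constants α, β_ω, β_v, β_e, β_r ≥ 0 such that −𝓜̃ − α 𝓝̃ − β_ω S_ω − β_v S_v − β_e S_e − β_r S_r is positive semidefinite, where 𝓜̃ is the symmetric block matrix of size n+p+q+m+s+1 with (1,1) block Y Aᵀ + A Y, (2,1) block Gᵀ, (3,1) block B_vᵀ, (4,1) block B_eᵀ, (5,1) block B_rᵀ, all other blocks zero; 𝓝̃ = diag(Y, 0, 0, 0, 0, −1); S_ω = diag(0, −W_ω, 0, 0, 0, 1); S_v = diag(0, 0, −W_v, 0, 0, 1); S_e = diag(0, 0, 0, −P̄_e, 0, 1); S_r = diag(0, 0, 0, 0, −Π, 1). Then, with P = Y⁻¹, the ellipsoid ℰ = {ζ ∈ ℝⁿ : ζᵀ P ζ ≤ 1} is forward invariant for the closed-loop system: for every differentiable trajectory ζ : [0,∞) → ℝⁿ satisfying ζ̇(t) = A ζ(t) + G ω(t) + B_v v(t) + B_e ē(t) + B_r r(t) with ω(t)ᵀ W_ω ω(t) ≤ 1, v(t)ᵀ W_v v(t) ≤ 1, ē(t)ᵀ P̄_e ē(t) ≤ 1, r(t)ᵀ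 Π r(t) ≤ 1 for all t, ζ(0) ∈ ℰ implies ζ(t) ∈ ℰ for all t ≥ 0. -/

import Mathlib

open Matrix MeasureTheory Filter

/-- Index type for the stacked vector κ = (ζ, ω, v, ē, r, 1). -/
abbrev Idx (n p q m s : ℕ) := Fin n ⊕ Fin p ⊕ Fin q ⊕ Fin m ⊕ Fin s ⊕ Fin 1

noncomputable section

variable {n p q m s : ℕ}

/-- The stacked vector κ = (ζ, ω, v, ē, r, 1). -/
def stack (z : Fin n → ℝ) (w : Fin p → ℝ) (v : Fin q → ℝ) (e : Fin m → ℝ)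
    (r : Fin s → ℝ) : Idx n p q m s → ℝ :=
  Sum.elim z (Sum.elim w (Sum.elim v (Sum.elim e (Sum.elim r (fun _ => 1)))))

/-- The symmetric block matrix 𝓜 with (1,1) block Aᵀ P + P A and
(2,1),(3,1),(4,1),(5,1) blocks GᵀP, Bvᵀ P, Beᵀ P, Brᵀ P, all other blocks zero. -/
def bigM (P A : Matrix (Fin n) (Fin n) ℝ) (G : Matrix (Fin n) (Fin p) ℝ)
    (Bv : Matrix (Fin n) (Fin q) ℝ) (Be : Matrix (Fin n) (Fin m) ℝ)
    (Br : Matrix (Fin n) (Fin s) ℝ) : Matrix (Idx n p q m s) (Idx n p q m s) ℝ :=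
  Matrix.of fun i j => match i, j with
  | Sum.inl i, Sum.inl j => (Aᵀ * P + P * A) i j
  | Sum.inl i, Sum.inr (Sum.inl j) => (P * G) i j
  | Sum.inr (Sum.inl i), Sum.inl j => (Gᵀ * P) i j
  | Sum.inl i, Sum.inr (Sum.inr (Sum.inl j)) => (P * Bv) i j
  | Sum.inr (Sum.inr (Sum.inl i)), Sum.inl j => (Bvᵀ * P) i j
  | Sum.inl i, Sum.inr (Sum.inr (Sum.inr (Sum.inl j))) => (P * Be) i j
  | Sum.inr (Sum.inr (Sum.inr (Sum.inl i))), Sum.inl j => (Beᵀ * P) i j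
  | Sum.inl i, Sum.inr (Sum.inr (Sum.inr (Sum.inr (Sum.inl j)))) => (P * Br) i j
  | Sum.inr (Sum.inr (Sum.inr (Sum.inr (Sum.inl i)))), Sum.inl j => (Brᵀ * P) i j
  | _, _ => 0

/-- The congruence-transformed block matrix 𝓜̃ with (1,1) block Y Aᵀ + A Y and
(2,1),(3,1),(4,1),(5,1) blocks Gᵀ, Bvᵀ, Beᵀ, Brᵀ, all other blocks zero. -/
def bigMt (Y A : Matrix (Fin n) (Fin n) ℝ) (G : Matrix (Fin n) (Fin p) ℝ)
    (Bv : Matrix (Fin n) (Fin q) ℝ) (Be : Matrix (Fin n) (Fin m) ℝ)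
    (Br : Matrix (Fin n) (Fin s) ℝ) : Matrix (Idx n p q m s) (Idx n p q m s) ℝ :=
  Matrix.of fun i j => match i, j with
  | Sum.inl i, Sum.inl j => (Y * Aᵀ + A * Y) i j
  | Sum.inl i, Sum.inr (Sum.inl j) => G i j
  | Sum.inr (Sum.inl i), Sum.inl j => Gᵀ i j
  | Sum.inl i, Sum.inr (Sum.inr (Sum.inl j)) => Bv i j
  | Sum.inr (Sum.inr (Sum.inl i)), Sum.inl j => Bvᵀ i j
  | Sum.inl i, Sum.inr (Sum.inr (Sum.inr (Sum.inl j))) => Be i j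
  | Sum.inr (Sum.inr (Sum.inr (Sum.inl i))), Sum.inl j => Beᵀ i j
  | Sum.inl i, Sum.inr (Sum.inr (Sum.inr (Sum.inr (Sum.inl j)))) => Br i j
  | Sum.inr (Sum.inr (Sum.inr (Sum.inr (Sum.inl i)))), Sum.inl j => Brᵀ i j
  | _, _ => 0

/-- 𝓝 = diag(P, 0, 0, 0, 0, −1). -/
def bigN (P : Matrix (Fin n) (Fin n) ℝ) : Matrix (Idx n p q m s) (Idx n p q m s) ℝ :=
  Matrix.of fun i j => match i, j with
  | Sum.inl i, Sum.inl j => P i j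
  | Sum.inr (Sum.inr (Sum.inr (Sum.inr (Sum.inr _)))),
    Sum.inr (Sum.inr (Sum.inr (Sum.inr (Sum.inr _)))) => -1
  | _, _ => 0

/-- S_ω = diag(0, −W_ω, 0, 0, 0, 1). -/
def Sw (W : Matrix (Fin p) (Fin p) ℝ) : Matrix (Idx n p q m s) (Idx n p q m s) ℝ :=
  Matrix.of fun i j => match i, j with
  | Sum.inr (Sum.inl i), Sum.inr (Sum.inl j) => -W i j
  | Sum.inr (Sum.inr (Sum.inr (Sum.inr (Sum.inr _)))),
    Sum.inr (Sum.inr (Sum.inr (Sum.inr (Sum.inr _)))) => 1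
  | _, _ => 0

/-- S_v = diag(0, 0, −W_v, 0, 0, 1). -/
def Sv (W : Matrix (Fin q) (Fin q) ℝ) : Matrix (Idx n p q m s) (Idx n p q m s) ℝ :=
  Matrix.of fun i j => match i, j with
  | Sum.inr (Sum.inr (Sum.inl i)), Sum.inr (Sum.inr (Sum.inl j)) => -W i j
  | Sum.inr (Sum.inr (Sum.inr (Sum.inr (Sum.inr _)))),
    Sum.inr (Sum.inr (Sum.inr (Sum.inr (Sum.inr _)))) => 1
  | _, _ => 0

/-- S_e = diag(0, 0, 0, −P̄_e, 0, 1). -/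
def Se (W : Matrix (Fin m) (Fin m) ℝ) : Matrix (Idx n p q m s) (Idx n p q m s) ℝ :=
  Matrix.of fun i j => match i, j with
  | Sum.inr (Sum.inr (Sum.inr (Sum.inl i))),
    Sum.inr (Sum.inr (Sum.inr (Sum.inl j))) => -W i j
  | Sum.inr (Sum.inr (Sum.inr (Sum.inr (Sum.inr _)))),
    Sum.inr (Sum.inr (Sum.inr (Sum.inr (Sum.inr _)))) => 1
  | _, _ => 0

/-- S_r = diag(0, 0, 0, 0, −Π, 1). -/
def Sr (W : Matrix (Fin s) (Fin s) ℝ) : Matrix (Idx n p q m s) (Idx n p q m s) ℝ :=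
  Matrix.of fun i j => match i, j with
  | Sum.inr (Sum.inr (Sum.inr (Sum.inr (Sum.inl i)))),
    Sum.inr (Sum.inr (Sum.inr (Sum.inr (Sum.inl j)))) => -W i j
  | Sum.inr (Sum.inr (Sum.inr (Sum.inr (Sum.inr _)))),
    Sum.inr (Sum.inr (Sum.inr (Sum.inr (Sum.inr _)))) => 1
  | _, _ => 0

lemma quad_N (P : Matrix (Fin n) (Fin n) ℝ) (z : Fin n → ℝ) (w : Fin p → ℝ) (v : Fin q → ℝ)
    (e : Fin m → ℝ) (r : Fin s → ℝ) :
    stack z w v e r ⬝ᵥ bigN P *ᵥ stack z w v e r = z ⬝ᵥ P *ᵥ z - 1 := by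
  simp [stack, bigN, dotProduct, mulVec, Fintype.sum_sum_type, sub_eq_add_neg]

lemma quad_Sw (W : Matrix (Fin p) (Fin p) ℝ) (z : Fin n → ℝ) (w : Fin p → ℝ) (v : Fin q → ℝ)
    (e : Fin m → ℝ) (r : Fin s → ℝ) :
    stack z w v e r ⬝ᵥ Sw W *ᵥ stack z w v e r = 1 - w ⬝ᵥ W *ᵥ w := by
  simp [stack, Sw, dotProduct, mulVec, Fintype.sum_sum_type]; ring

lemma quad_Sv (W : Matrix (Fin q) (Fin q) ℝ) (z : Fin n → ℝ) (w : Fin p → ℝ) (v : Fin q → ℝ)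
    (e : Fin m → ℝ) (r : Fin s → ℝ) :
    stack z w v e r ⬝ᵥ Sv W *ᵥ stack z w v e r = 1 - v ⬝ᵥ W *ᵥ v := by
  simp [stack, Sv, dotProduct, mulVec, Fintype.sum_sum_type]; ring

lemma quad_Se (W : Matrix (Fin m) (Fin m) ℝ) (z : Fin n → ℝ) (w : Fin p → ℝ) (v : Fin q → ℝ)
    (e : Fin m → ℝ) (r : Fin s → ℝ) :
    stack z w v e r ⬝ᵥ Se W *ᵥ stack z w v e r = 1 - e ⬝ᵥ W *ᵥ e := by
  simp [stack, Se, dotProduct, mulVec, Fintype.sum_sum_type]; ring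

lemma quad_Sr (W : Matrix (Fin s) (Fin s) ℝ) (z : Fin n → ℝ) (w : Fin p → ℝ) (v : Fin q → ℝ)
    (e : Fin m → ℝ) (r : Fin s → ℝ) :
    stack z w v e r ⬝ᵥ Sr W *ᵥ stack z w v e r = 1 - r ⬝ᵥ W *ᵥ r := by
  simp [stack, Sr, dotProduct, mulVec, Fintype.sum_sum_type]; ring

lemma quad_Mt_aux (Y A : Matrix (Fin n) (Fin n) ℝ) (G : Matrix (Fin n) (Fin p) ℝ)
    (Bv : Matrix (Fin n) (Fin q) ℝ) (Be : Matrix (Fin n) (Fin m) ℝ)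
    (Br : Matrix (Fin n) (Fin s) ℝ) (z : Fin n → ℝ) (w : Fin p → ℝ) (v : Fin q → ℝ)
    (e : Fin m → ℝ) (r : Fin s → ℝ) :
    stack z w v e r ⬝ᵥ bigMt Y A G Bv Be Br *ᵥ stack z w v e r =
      z ⬝ᵥ (Y * Aᵀ + A * Y) *ᵥ z + z ⬝ᵥ G *ᵥ w + z ⬝ᵥ Bv *ᵥ v + z ⬝ᵥ Be *ᵥ e + z ⬝ᵥ Br *ᵥ r
      + w ⬝ᵥ Gᵀ *ᵥ z + v ⬝ᵥ Bvᵀ *ᵥ z + e ⬝ᵥ Beᵀ *ᵥ z + r ⬝ᵥ Brᵀ *ᵥ z := by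
  simp [stack, bigMt, dotProduct, mulVec, Fintype.sum_sum_type, mul_add,
    Finset.sum_add_distrib]
  ring

lemma dot_tr {a b : ℕ} (G : Matrix (Fin a) (Fin b) ℝ) (z : Fin a → ℝ) (w : Fin b → ℝ) :
    w ⬝ᵥ Gᵀ *ᵥ z = z ⬝ᵥ G *ᵥ w := by
  rw [mulVec_transpose, dotProduct_comm, dotProduct_mulVec]

lemma quad_Mt (Y A : Matrix (Fin n) (Fin n) ℝ) (hY : Yᵀ = Y) (G : Matrix (Fin n) (Fin p) ℝ)
    (Bv : Matrix (Fin n) (Fin q) ℝ) (Be : Matrix (Fin n) (Fin m) ℝ)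
    (Br : Matrix (Fin n) (Fin s) ℝ) (z : Fin n → ℝ) (w : Fin p → ℝ) (v : Fin q → ℝ)
    (e : Fin m → ℝ) (r : Fin s → ℝ) :
    stack z w v e r ⬝ᵥ bigMt Y A G Bv Be Br *ᵥ stack z w v e r =
      2 * (z ⬝ᵥ (A *ᵥ (Y *ᵥ z) + G *ᵥ w + Bv *ᵥ v + Be *ᵥ e + Br *ᵥ r)) := by
  have h : z ⬝ᵥ (Y * Aᵀ) *ᵥ z = z ⬝ᵥ A *ᵥ (Y *ᵥ z) := by
    have : Y * Aᵀ = (A * Y)ᵀ := by rw [transpose_mul, hY]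
    rw [this, dot_tr, mulVec_mulVec]
  rw [quad_Mt_aux, add_mulVec, dotProduct_add, h]
  simp only [dot_tr, dotProduct_add, ← mulVec_mulVec]
  ring

lemma hasDeriv_quad (P : Matrix (Fin n) (Fin n) ℝ) (ζ : ℝ → Fin n → ℝ) (d : Fin n → ℝ) (t : ℝ)
    (h : HasDerivAt ζ d t) :
    HasDerivAt (fun t => ζ t ⬝ᵥ P *ᵥ ζ t) (d ⬝ᵥ P *ᵥ ζ t + ζ t ⬝ᵥ P *ᵥ d) t := by
  have hi := hasDerivAt_pi.1 h
  simp only [dotProduct, mulVec, ← Finset.sum_add_distrib]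
  exact HasDerivAt.fun_sum fun i _ => (hi i).mul
    (HasDerivAt.fun_sum fun j _ => (hi j).const_mul (P i j))

end

/-- **forward invariance from the linearized LMI.** If Y ≻ 0 and the
congruence-transformed LMI −𝓜̃ − α𝓝̃ − βω Sω − βv Sv − βe Se − βr Sr ⪰ 0 is feasible,
then with P = Y⁻¹ the ellipsoid {ζ : ζᵀ P ζ ≤ 1} is forward invariant for every
trajectory of the closed-loop system under admissible disturbances. -/
theorem stmt5 {n p q m s : ℕ}
    (A : Matrix (Fin n) (Fin n) ℝ)
    (G : Matrix (Fin n) (Fin p) ℝ) (Bv : Matrix (Fin n) (Fin q) ℝ)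
    (Be : Matrix (Fin n) (Fin m) ℝ) (Br : Matrix (Fin n) (Fin s) ℝ)
    (Wω : Matrix (Fin p) (Fin p) ℝ) (hWω : Wω.PosDef)
    (Wv : Matrix (Fin q) (Fin q) ℝ) (hWv : Wv.PosDef)
    (Pe : Matrix (Fin m) (Fin m) ℝ) (hPe : Pe.PosDef)
    (Pim : Matrix (Fin s) (Fin s) ℝ) (hPim : Pim.PosDef)
    (Y : Matrix (Fin n) (Fin n) ℝ) (hY : Y.PosDef)
    (α βω βv βe βr : ℝ) (hα : 0 ≤ α) (hβω : 0 ≤ βω) (hβv : 0 ≤ βv)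
    (hβe : 0 ≤ βe) (hβr : 0 ≤ βr)
    (hLMI : (-(bigMt Y A G Bv Be Br) - α • bigN Y - βω • Sw Wω - βv • Sv Wv
              - βe • Se Pe - βr • Sr Pim).PosSemidef)
    (ζ : ℝ → Fin n → ℝ) (ω : ℝ → Fin p → ℝ) (v : ℝ → Fin q → ℝ)
    (e : ℝ → Fin m → ℝ) (r : ℝ → Fin s → ℝ)
    (hdyn : ∀ t ∈ Set.Ici (0:ℝ), HasDerivAt ζ
      (A *ᵥ ζ t + G *ᵥ ω t + Bv *ᵥ v t + Be *ᵥ e t + Br *ᵥ r t) t)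
    (hω : ∀ t ∈ Set.Ici (0:ℝ), ω t ⬝ᵥ Wω *ᵥ ω t ≤ 1)
    (hv : ∀ t ∈ Set.Ici (0:ℝ), v t ⬝ᵥ Wv *ᵥ v t ≤ 1)
    (he : ∀ t ∈ Set.Ici (0:ℝ), e t ⬝ᵥ Pe *ᵥ e t ≤ 1)
    (hr : ∀ t ∈ Set.Ici (0:ℝ), r t ⬝ᵥ Pim *ᵥ r t ≤ 1)
    (h0 : ζ 0 ⬝ᵥ Y⁻¹ *ᵥ ζ 0 ≤ 1) :
    ∀ t ∈ Set.Ici (0:ℝ), ζ t ⬝ᵥ Y⁻¹ *ᵥ ζ t ≤ 1 := by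
  have hYs : Yᵀ = Y := by simpa using hY.isHermitian.eq
  have hdet : IsUnit Y.det := hY.isUnit.map detMonoidHom
  have hPs : (Y⁻¹)ᵀ = Y⁻¹ := by rw [transpose_nonsing_inv, hYs]
  set V : ℝ → ℝ := fun t => ζ t ⬝ᵥ Y⁻¹ *ᵥ ζ t with hV
  have key : ∀ t ∈ Set.Ici (0:ℝ), ∃ d, HasDerivAt V d t ∧ d ≤ α * (1 - V t) := by
    intro t ht
    refine ⟨_, hasDeriv_quad Y⁻¹ ζ _ t (hdyn t ht), ?_⟩
    have h := hLMI.dotProduct_mulVec_nonneg (stack (Y⁻¹ *ᵥ ζ t) (ω t) (v t) (e t) (r t))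
    have hYy : Y *ᵥ (Y⁻¹ *ᵥ ζ t) = ζ t := by
      rw [mulVec_mulVec, mul_nonsing_inv _ hdet, one_mulVec]
    simp only [star_trivial, sub_mulVec, neg_mulVec, smul_mulVec, dotProduct_sub, dotProduct_neg,
      dotProduct_smul, quad_N, quad_Sw, quad_Sv, quad_Se, quad_Sr, quad_Mt Y A hYs, hYy,
      smul_eq_mul] at h
    generalize A *ᵥ ζ t + G *ᵥ ω t + Bv *ᵥ v t + Be *ᵥ e t + Br *ᵥ r t = d at h ⊢
    have h1 : ζ t ⬝ᵥ Y⁻¹ *ᵥ d = (Y⁻¹ *ᵥ ζ t) ⬝ᵥ d := by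
      rw [← dot_tr, hPs, dotProduct_comm]
    have h2 : d ⬝ᵥ Y⁻¹ *ᵥ ζ t = (Y⁻¹ *ᵥ ζ t) ⬝ᵥ d := dotProduct_comm _ _
    have h3 : (Y⁻¹ *ᵥ ζ t) ⬝ᵥ ζ t = V t := dotProduct_comm _ _
    rw [h3] at h
    rw [h1, h2]
    have := mul_nonneg hβω (sub_nonneg.2 (hω t ht))
    have := mul_nonneg hβv (sub_nonneg.2 (hv t ht))
    have := mul_nonneg hβe (sub_nonneg.2 (he t ht))
    have := mul_nonneg hβr (sub_nonneg.2 (hr t ht))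
    linarith
  choose! d hd hle using key
  have hF : ∀ t ∈ Set.Ici (0:ℝ), HasDerivAt (fun t => (V t - 1) * Real.exp (α * t))
      (d t * Real.exp (α * t) + (V t - 1) * (Real.exp (α * t) * (α * 1))) t := fun t ht =>
    ((hd t ht).sub_const 1).mul (((hasDerivAt_id t).const_mul α).exp)
  have hanti : AntitoneOn (fun t => (V t - 1) * Real.exp (α * t)) (Set.Ici (0:ℝ)) := by
    apply antitoneOn_of_deriv_nonpos (convex_Ici 0)
    · exact fun t ht => (hF t ht).continuousAt.continuousWithinAt
    · exact fun t ht => (hF t (interior_subset ht)).differentiableAt.differentiableWithinAt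
    · intro t ht
      have ht := interior_subset ht
      rw [(hF t ht).deriv]
      have := mul_nonneg (sub_nonneg.2 (hle t ht)) (Real.exp_pos (α * t)).le
      linarith
  intro t ht
  have h := hanti (Set.self_mem_Ici) ht ht
  simp only [mul_zero, Real.exp_zero, mul_one] at h
  have h0' : V 0 ≤ 1 := h0
  have h4 : (V t - 1) * Real.exp (α * t) ≤ 0 := by linarith
  have := nonpos_of_mul_nonpos_left h4 (Real.exp_pos _)
  show V t ≤ 1
  linarith
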